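/- Suppose 0 ≤ K and h(0) < −rK, and let δ†, α, x̂ and K₀⋆ be defined as follows: δ† is the unique solution of ∫_δ^∞ s^{−n−1}[h(s) + rK] ds = 0; α > δ† is the unique solution of m∫_{δ†}^α s^{−m−1}[h(s) − rK₁] ds + r(K₁ + K)δ†^{−m} = 0; x̂ is the unique zero in (δ†, α) of the derivative of g(x) = (x^m/(σ²(n−m)))∫ₓ^α s^{−m−1}[h(s) − rK₁] ds − (xⁿ/(σ²(n−m)))∫ₓ^α s^{−n−1}[h(s) − rK₁] ds; and K₀⋆ = −K₁ − (m x̂^m/r)∫_{x̂}^α s^{−m−1}[h(s) − rK₁] ds. Then K₀ = K₀⋆ if and only if the pair (β, α) = (x̂, α) satisfies the two equations m∫_β^α s^{−m−1}h(s) ds + rK₀β^{−m} + rK₁α^{−m} = 0 and n∫_β^α s^{−n−1}h(s) ds + rK₀β^{−n} + rK₁α^{−n} = 0. -/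

import Mathlib

open MeasureTheory Set Filter Topology

/-- `h(0) := lim_{x↓0} h(x) ∈ [-∞, ∞)`; for a right-continuous increasing `h` this is the
infimum of `h` over `(0, ∞)`, viewed in the extended reals. -/
noncomputable def hZero (h : ℝ → ℝ) : EReal := ⨅ x ∈ Set.Ioi (0 : ℝ), (h x : EReal)

/-- The particular solution `R_h` to the ODE `σ²x²w'' + bxw' - rw + h = 0`. -/
noncomputable def Rh (σ m n : ℝ) (h : ℝ → ℝ) (x : ℝ) : ℝ :=
  (1 / (σ ^ 2 * (n - m))) *
    (x ^ m * (∫ s in Set.Ioc (0 : ℝ) x, s ^ (-m - 1) * h s)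
      + x ^ n * ∫ s in Set.Ioi x, s ^ (-n - 1) * h s)

/-- The function `g(x) = (x^m/(σ²(n-m))) ∫_x^α s^{-m-1}[h(s)-rK₁] ds
  - (x^n/(σ²(n-m))) ∫_x^α s^{-n-1}[h(s)-rK₁] ds`. -/
noncomputable def gFun (r σ m n K₁ α : ℝ) (h : ℝ → ℝ) (x : ℝ) : ℝ :=
  (x ^ m / (σ ^ 2 * (n - m))) * (∫ s in x..α, s ^ (-m - 1) * (h s - r * K₁))
    - (x ^ n / (σ ^ 2 * (n - m))) * ∫ s in x..α, s ^ (-n - 1) * (h s - r * K₁)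

/-- `K₀⋆ = -K₁ - (m x̂^m / r) ∫_{x̂}^α s^{-m-1}[h(s) - rK₁] ds`. -/
noncomputable def KZeroStar (r m K₁ : ℝ) (h : ℝ → ℝ) (xh α : ℝ) : ℝ :=
  -K₁ - (m * xh ^ m / r) * ∫ s in xh..α, s ^ (-m - 1) * (h s - r * K₁)

/-!
For `p = m` and `p = n`, absorbing `r K₁ α^{-p}` into the integral turns the equation for `p` into
`p x̂^p ∫_{x̂}^α s^{-p-1} [h(s) - r K₁] ds = -r (K₀ + K₁)`. For `p = m` this is the definition of
`K₀⋆` rearranged. The left-hand sides for `m` and `n` agree exactly when `g'(x̂) = 0`: the kernel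
`(x/s)^m / s - (x/s)^n / s` of `g` vanishes on the diagonal `s = x`, so `h` does not enter `g'(x)`
through the endpoint of the integral, and `g` is differentiable even at a jump of `h`.
-/

section VanishingWeight

open scoped Interval

variable {E : Type*} [NormedAddCommGroup E] {S : Set ℝ} {f : ℝ → E} {φ : ℝ → ℝ} {x y : ℝ}

theorem intervalIntegrable_of_locallyIntegrableOn [S.OrdConnected] (hf : LocallyIntegrableOn f S)
    (hx : x ∈ S) (hy : y ∈ S) : IntervalIntegrable f volume x y :=
  (hf.integrableOn_compact_subset (OrdConnected.uIcc_subset ‹_› hx hy)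
    isCompact_uIcc).intervalIntegrable

variable [NormedSpace ℝ E]

theorem hasDerivAt_smul_of_continuousAt {P : ℝ → ℝ} {P' : ℝ} {A : ℝ → E}
    (hP : HasDerivAt P P' x) (hPx : P x = 0) (hA : ContinuousAt A x) :
    HasDerivAt (fun u => P u • A u) (P' • A x) x := by
  rw [hasDerivAt_iff_tendsto_slope] at hP ⊢
  refine (hP.smul (hA.tendsto.mono_left nhdsWithin_le_nhds)).congr fun u => ?_
  simp only [slope, vsub_eq_sub, hPx, sub_zero, zero_smul, smul_eq_mul, mul_smul]

theorem continuousAt_integral_left [S.OrdConnected] (hS : IsOpen S) (hf : LocallyIntegrableOn f S)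
    (hx : x ∈ S) (hy : y ∈ S) : ContinuousAt (fun u => ∫ s in u..y, f s) x := by
  obtain ⟨a, b, hxab, hab_nhds, habS⟩ := exists_Icc_mem_subset_of_mem_nhds (hS.mem_nhds hx)
  have hab : uIcc a b = Icc a b := uIcc_of_le (hxab.1.trans hxab.2)
  have hfrom_x : ContinuousAt (fun u => ∫ s in x..u, f s) x :=
    (intervalIntegral.continuousOn_primitive_interval'
      (hf.integrableOn_compact_subset (hab ▸ habS) isCompact_uIcc).intervalIntegrable
      (hab ▸ hxab)).continuousAt (hab ▸ hab_nhds)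
  have hsub : ContinuousAt (fun u => (∫ s in x..y, f s) - ∫ s in x..u, f s) x :=
    continuousAt_const.sub hfrom_x
  refine hsub.congr ?_
  filter_upwards [hS.mem_nhds hx] with u hu
  exact intervalIntegral.integral_interval_sub_left
    (intervalIntegrable_of_locallyIntegrableOn hf hx hy)
    (intervalIntegrable_of_locallyIntegrableOn hf hx hu)

theorem norm_integral_smul_le_mul_abs {C : ℝ} (hC : 0 ≤ C) (hf : IntervalIntegrable f volume x y)
    (hφ : ∀ s ∈ Ι x y, ‖φ s‖ ≤ C) :
    ‖∫ s in x..y, φ s • f s‖ ≤ C * |∫ s in x..y, ‖f s‖| := by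
  have hle : ∀ s ∈ Ι x y, ‖φ s • f s‖ ≤ C * ‖f s‖ := fun s hs => by
    rw [norm_smul]
    gcongr
    exact hφ s hs
  calc ‖∫ s in x..y, φ s • f s‖
      ≤ |∫ s in x..y, C * ‖f s‖| := intervalIntegral.norm_integral_le_abs_of_norm_le
        ((ae_restrict_iff' measurableSet_uIoc).2 (.of_forall hle)) (hf.norm.const_mul C)
    _ = C * |∫ s in x..y, ‖f s‖| := by
      rw [intervalIntegral.integral_const_mul, abs_mul, abs_of_nonneg hC]

theorem integral_smul_isBigO_sub_mul [S.OrdConnected] (hS : IsOpen S)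
    (hf : LocallyIntegrableOn f S) (hφx : φ =O[𝓝 x] fun s => s - x) (hx : x ∈ S) :
    (fun u => ∫ s in u..x, φ s • f s) =O[𝓝 x] fun u => (u - x) * ∫ s in u..x, ‖f s‖ := by
  obtain ⟨C, hC, hφC⟩ := hφx.exists_pos
  obtain ⟨ε, hε, hball⟩ := Metric.eventually_nhds_iff_ball.1 hφC.bound
  refine Asymptotics.IsBigO.of_bound C ?_
  filter_upwards [hS.mem_nhds hx, Metric.ball_mem_nhds x hε] with u huS hu
  rw [norm_mul, ← mul_assoc, Real.norm_eq_abs (∫ s in u..x, ‖f s‖)]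
  refine norm_integral_smul_le_mul_abs (by positivity)
    (intervalIntegrable_of_locallyIntegrableOn hf huS hx) fun s hs => ?_
  have hsu : ‖s - x‖ ≤ ‖u - x‖ := by
    simpa only [Real.norm_eq_abs, abs_sub_comm x] using
      abs_sub_right_of_mem_uIcc (uIoc_subset_uIcc hs)
  exact (hball s (mem_ball_iff_norm.2 (hsu.trans_lt (mem_ball_iff_norm.1 hu)))).trans (by gcongr)

theorem hasDerivAt_integral_smul_of_isBigO_sub [S.OrdConnected] (hS : IsOpen S)
    (hf : LocallyIntegrableOn f S) (hφ : ContinuousOn φ S)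
    (hφx : φ =O[𝓝 x] fun s => s - x) (hx : x ∈ S) (hy : y ∈ S) :
    HasDerivAt (fun u => ∫ s in u..y, φ s • f s) 0 x := by
  have hφf : LocallyIntegrableOn (fun s => φ s • f s) S :=
    hf.continuousOn_smul hS.isLocallyClosed hφ
  have hnorm_tendsto : (fun u => ∫ s in u..x, ‖f s‖) =o[𝓝 x] fun _ => (1 : ℝ) :=
    (Asymptotics.isLittleO_one_iff ℝ).2 <| by
      simpa using (continuousAt_integral_left hS hf.norm hx hx).tendsto
  have hderiv : HasDerivAt (fun u => ∫ s in u..x, φ s • f s) 0 x := by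
    rw [hasDerivAt_iff_isLittleO]
    simpa using (integral_smul_isBigO_sub_mul hS hf hφx hx).trans_isLittleO
      ((Asymptotics.isBigO_refl _ _).mul_isLittleO hnorm_tendsto)
  refine (hderiv.add_const (∫ s in x..y, φ s • f s)).congr_of_eventuallyEq ?_
  filter_upwards [hS.mem_nhds hx] with u hu
  exact (intervalIntegral.integral_add_adjacent_intervals
    (intervalIntegrable_of_locallyIntegrableOn hφf hu hx)
    (intervalIntegrable_of_locallyIntegrableOn hφf hx hy)).symm

theorem integral_sub_mul_smul [S.OrdConnected] (hS : IsLocallyClosed S)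
    (hf : LocallyIntegrableOn f S) {a b : ℝ → ℝ} (ha : ContinuousOn a S) (hb : ContinuousOn b S)
    (p q : ℝ) (hx : x ∈ S) (hy : y ∈ S) :
    ∫ s in x..y, (p * a s - q * b s) • f s =
      p • (∫ s in x..y, a s • f s) - q • ∫ s in x..y, b s • f s := by
  have hint {c : ℝ → ℝ} (hc : ContinuousOn c S) (t : ℝ) :
      IntervalIntegrable (fun s => t • c s • f s) volume x y :=
    (intervalIntegrable_of_locallyIntegrableOn
      (hf.continuousOn_smul hS hc) hx hy).smul t
  simp only [sub_smul, mul_smul]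
  rw [intervalIntegral.integral_sub (hint ha p) (hint hb q), intervalIntegral.integral_smul,
    intervalIntegral.integral_smul]

/- Freezing the coefficients at `x` leaves the integral of `(P x * a - Q x * b) • f`, whose weight
vanishes at `x`. -/
theorem hasDerivAt_smul_integral_sub_smul_integral [S.OrdConnected] (hS : IsOpen S)
    (hf : LocallyIntegrableOn f S) {P Q a b : ℝ → ℝ} {P' Q' : ℝ}
    (hP : HasDerivAt P P' x) (hQ : HasDerivAt Q Q' x)
    (ha : ContinuousOn a S) (hb : ContinuousOn b S)
    (hax : DifferentiableAt ℝ a x) (hbx : DifferentiableAt ℝ b x)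
    (hdiag : P x * a x = Q x * b x) (hx : x ∈ S) (hy : y ∈ S) :
    HasDerivAt (fun u => P u • (∫ s in u..y, a s • f s) - Q u • ∫ s in u..y, b s • f s)
      (P' • (∫ s in x..y, a s • f s) - Q' • ∫ s in x..y, b s • f s) x := by
  have haf : LocallyIntegrableOn (fun s => a s • f s) S :=
    hf.continuousOn_smul hS.isLocallyClosed ha
  have hbf : LocallyIntegrableOn (fun s => b s • f s) S :=
    hf.continuousOn_smul hS.isLocallyClosed hb
  have hP_var : HasDerivAt (fun u => (P u - P x) • ∫ s in u..y, a s • f s)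
      (P' • ∫ s in x..y, a s • f s) x :=
    hasDerivAt_smul_of_continuousAt (hP.sub_const _) (sub_self _)
      (continuousAt_integral_left hS haf hx hy)
  have hQ_var : HasDerivAt (fun u => (Q u - Q x) • ∫ s in u..y, b s • f s)
      (Q' • ∫ s in x..y, b s • f s) x :=
    hasDerivAt_smul_of_continuousAt (hQ.sub_const _) (sub_self _)
      (continuousAt_integral_left hS hbf hx hy)
  have hφx : (fun s => P x * a s - Q x * b s) =O[𝓝 x] fun s => s - x := by
    simpa [hdiag] using ((hax.const_mul (P x)).sub (hbx.const_mul (Q x))).isBigO_sub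
  have hfrozen : HasDerivAt (fun u => ∫ s in u..y, (P x * a s - Q x * b s) • f s) 0 x :=
    hasDerivAt_integral_smul_of_isBigO_sub hS hf
      ((ha.const_mul (P x)).sub (hb.const_mul (Q x))) hφx hx hy
  refine (((hP_var.sub hQ_var).add hfrozen).congr_deriv (add_zero _)).congr_of_eventuallyEq ?_
  filter_upwards [hS.mem_nhds hx] with u hu
  simp only [Pi.add_apply, Pi.sub_apply,
    integral_sub_mul_smul hS.isLocallyClosed hf ha hb _ _ hu hy]
  module

end VanishingWeight

theorem locallyIntegrableOn_of_monotoneOn {f : ℝ → ℝ} {S : Set ℝ} (hS : IsLocallyClosed S)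
    (hf : MonotoneOn f S) : LocallyIntegrableOn f S :=
  (locallyIntegrableOn_iff hS).2 fun _ hk hkc => (hf.mono hk).integrableOn_isCompact hkc

section PowerWeights

variable {h : ℝ → ℝ} {x y : ℝ}

theorem continuousOn_rpow_const_Ioi (p : ℝ) : ContinuousOn (fun s : ℝ => s ^ p) (Ioi 0) :=
  continuousOn_id.rpow_const fun _ hs => .inl (ne_of_gt hs)

theorem intervalIntegrable_rpow_mul (hh : LocallyIntegrableOn h (Ioi 0)) (p : ℝ)
    (hx : 0 < x) (hy : 0 < y) : IntervalIntegrable (fun s => s ^ p * h s) volume x y :=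
  intervalIntegrable_of_locallyIntegrableOn
    (hh.continuousOn_mul (continuousOn_rpow_const_Ioi p) isOpen_Ioi.isLocallyClosed)
    hx hy

theorem rpow_mul_rpow_neg_sub_one (hx : 0 < x) (p : ℝ) : x ^ p * x ^ (-p - 1) = x⁻¹ := by
  rw [← Real.rpow_add hx, ← Real.rpow_neg_one]
  ring_nf

theorem mul_integral_rpow_neg_sub_one (p : ℝ) (hx : 0 < x) (hy : 0 < y) :
    p * ∫ s in x..y, s ^ (-p - 1) = x ^ (-p) - y ^ (-p) := by
  rcases eq_or_ne p 0 with rfl | hp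
  · simp
  · have h0 : (0 : ℝ) ∉ uIcc x y := notMem_uIcc_of_lt hx hy
    rw [integral_rpow (.inr ⟨fun e => hp (by linarith), h0⟩), sub_add_cancel]
    field_simp
    ring

theorem mul_integral_add_eq_zero_iff (hh : LocallyIntegrableOn h (Ioi 0)) (p r K₀ K₁ : ℝ)
    (hx : 0 < x) (hy : 0 < y) :
    p * (∫ s in x..y, s ^ (-p - 1) * h s) + r * K₀ * x ^ (-p) + r * K₁ * y ^ (-p) = 0 ↔
      p * x ^ p * (∫ s in x..y, s ^ (-p - 1) * (h s - r * K₁)) = -(r * (K₀ + K₁)) := by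
  have hsub : ∫ s in x..y, s ^ (-p - 1) * (h s - r * K₁) =
      (∫ s in x..y, s ^ (-p - 1) * h s) - (∫ s in x..y, s ^ (-p - 1)) * (r * K₁) := by
    simp only [mul_sub]
    rw [intervalIntegral.integral_sub (intervalIntegrable_rpow_mul hh _ hx hy)
        ((intervalIntegral.intervalIntegrable_rpow
          (.inr (notMem_uIcc_of_lt hx hy))).mul_const _),
      intervalIntegral.integral_mul_const]
  have hpow := mul_integral_rpow_neg_sub_one p hx hy
  have hinv : x ^ p * x ^ (-p) = 1 := by rw [← Real.rpow_add hx, add_neg_cancel, Real.rpow_zero]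
  have hfactor : p * x ^ p * (∫ s in x..y, s ^ (-p - 1) * (h s - r * K₁)) + r * (K₀ + K₁) =
      x ^ p * (p * (∫ s in x..y, s ^ (-p - 1) * h s) + r * K₀ * x ^ (-p) + r * K₁ * y ^ (-p)) := by
    rw [hsub]
    linear_combination (-(x ^ p * r * K₁)) * hpow - (r * (K₀ + K₁)) * hinv
  rw [← add_eq_zero_iff_eq_neg, hfactor, mul_eq_zero_iff_left (Real.rpow_pos_of_pos hx p).ne']

end PowerWeights

section DerivGFun

variable {r σ m n K₀ K₁ α x : ℝ} {h : ℝ → ℝ}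

theorem hasDerivAt_gFun (hh : LocallyIntegrableOn h (Ioi 0)) (hx : 0 < x) (hα : 0 < α) :
    HasDerivAt (gFun r σ m n K₁ α h)
      (m * x ^ (m - 1) / (σ ^ 2 * (n - m)) * (∫ s in x..α, s ^ (-m - 1) * (h s - r * K₁))
        - n * x ^ (n - 1) / (σ ^ 2 * (n - m)) * ∫ s in x..α, s ^ (-n - 1) * (h s - r * K₁)) x := by
  have hcoeff (p : ℝ) : HasDerivAt (fun u : ℝ => u ^ p / (σ ^ 2 * (n - m)))
      (p * x ^ (p - 1) / (σ ^ 2 * (n - m))) x :=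
    (Real.hasDerivAt_rpow_const (.inl hx.ne')).div_const _
  have hshift : LocallyIntegrableOn (fun s => h s - r * K₁) (Ioi 0) :=
    hh.sub ((locallyIntegrable_const _).locallyIntegrableOn _)
  have hdiag : x ^ m / (σ ^ 2 * (n - m)) * x ^ (-m - 1) =
      x ^ n / (σ ^ 2 * (n - m)) * x ^ (-n - 1) := by
    rw [div_mul_eq_mul_div, div_mul_eq_mul_div, rpow_mul_rpow_neg_sub_one hx,
      rpow_mul_rpow_neg_sub_one hx]
  exact hasDerivAt_smul_integral_sub_smul_integral isOpen_Ioi hshift (hcoeff m) (hcoeff n)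
    (continuousOn_rpow_const_Ioi _) (continuousOn_rpow_const_Ioi _)
    (Real.differentiableAt_rpow_const_of_ne _ hx.ne')
    (Real.differentiableAt_rpow_const_of_ne _ hx.ne') hdiag hx hα

theorem deriv_gFun_eq_zero_iff (hσ : σ ≠ 0) (hmn : m ≠ n) (hh : LocallyIntegrableOn h (Ioi 0))
    (hx : 0 < x) (hα : 0 < α) :
    deriv (gFun r σ m n K₁ α h) x = 0 ↔
      m * x ^ m * (∫ s in x..α, s ^ (-m - 1) * (h s - r * K₁)) =
        n * x ^ n * ∫ s in x..α, s ^ (-n - 1) * (h s - r * K₁) := by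
  have hnm : n - m ≠ 0 := sub_ne_zero.2 hmn.symm
  rw [(hasDerivAt_gFun hh hx hα).deriv, Real.rpow_sub_one hx.ne', Real.rpow_sub_one hx.ne',
    sub_eq_zero]
  field_simp

theorem eq_KZeroStar_iff (hr : r ≠ 0) :
    K₀ = KZeroStar r m K₁ h x α ↔
      m * x ^ m * (∫ s in x..α, s ^ (-m - 1) * (h s - r * K₁)) = -(r * (K₀ + K₁)) := by
  rw [KZeroStar, div_mul_eq_mul_div, eq_sub_iff_add_eq, ← eq_sub_iff_add_eq', div_eq_iff hr]
  constructor <;> intro <;> linarith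

theorem statement_19_general (hr : r ≠ 0) (hσ : σ ≠ 0) (hmn : m ≠ n)
    (hh : LocallyIntegrableOn h (Ioi 0)) (hx : 0 < x) (hα : 0 < α)
    (hderiv : deriv (gFun r σ m n K₁ α h) x = 0) :
    K₀ = KZeroStar r m K₁ h x α ↔
      (m * (∫ s in x..α, s ^ (-m - 1) * h s) + r * K₀ * x ^ (-m) + r * K₁ * α ^ (-m) = 0 ∧
       n * (∫ s in x..α, s ^ (-n - 1) * h s) + r * K₀ * x ^ (-n) + r * K₁ * α ^ (-n) = 0) := by
  rw [mul_integral_add_eq_zero_iff hh m r K₀ K₁ hx hα,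
    mul_integral_add_eq_zero_iff hh n r K₀ K₁ hx hα,
    ← (deriv_gFun_eq_zero_iff hσ hmn hh hx hα).1 hderiv, and_self]
  exact eq_KZeroStar_iff hr

end DerivGFun

theorem statement_19
    (r b σ m n : ℝ) (h : ℝ → ℝ)
    (hr : 0 < r) (hσ : σ ≠ 0) (hm : m < 0) (hn : 0 < n)
    (hmRoot : σ ^ 2 * m ^ 2 + (b - σ ^ 2) * m - r = 0)
    (hnRoot : σ ^ 2 * n ^ 2 + (b - σ ^ 2) * n - r = 0)
    (hMono : MonotoneOn h (Set.Ioi 0))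
    (hRC : ∀ x : ℝ, 0 < x → ContinuousWithinAt h (Set.Ici x) x)
    (hTop : Tendsto h atTop atTop)
    (hIntZero : ∀ x : ℝ, 0 < x →
      IntegrableOn (fun s : ℝ => s ^ (-m - 1) * h s) (Set.Ioc 0 x))
    (hIntTop : ∀ x : ℝ, 0 < x →
      IntegrableOn (fun s : ℝ => s ^ (-n - 1) * h s) (Set.Ioi x))
    (K₁ K₀ K : ℝ) (hK₁ : 0 < K₁) (hK₀ : 0 < K₀)
    (hK : 0 ≤ K) (hcond : hZero h < ((-(r * K) : ℝ) : EReal))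
    (δdag : ℝ) (hδdag : 0 < δdag)
    (hδdagEq : (∫ s in Set.Ioi δdag, s ^ (-n - 1) * (h s + r * K)) = 0)
    (α : ℝ) (hα : δdag < α)
    (hαEq : m * (∫ s in δdag..α, s ^ (-m - 1) * (h s - r * K₁))
      + r * (K₁ + K) * δdag ^ (-m) = 0)
    (xh : ℝ) (hxh : xh ∈ Set.Ioo δdag α)
    (hxhEq : deriv (gFun r σ m n K₁ α h) xh = 0)
    (hxhUniq : ∀ xh' : ℝ, xh' ∈ Set.Ioo δdag α →
      deriv (gFun r σ m n K₁ α h) xh' = 0 → xh' = xh) :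
    K₀ = KZeroStar r m K₁ h xh α ↔
      (m * (∫ s in xh..α, s ^ (-m - 1) * h s)
          + r * K₀ * xh ^ (-m) + r * K₁ * α ^ (-m) = 0 ∧
       n * (∫ s in xh..α, s ^ (-n - 1) * h s)
          + r * K₀ * xh ^ (-n) + r * K₁ * α ^ (-n) = 0) := by
  have hh := locallyIntegrableOn_of_monotoneOn isOpen_Ioi.isLocallyClosed hMono
  exact statement_19_general hr.ne' hσ (hm.trans hn).ne hh (hδdag.trans hxh.1) (hδdag.trans hα)
    hxhEq
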